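/- arXiv:1611.04098 — 3 statements merged into one kernel-verified Lean document; each statement's English description precedes it below -/
import Mathlib

section
/- Let (W,S) be a Coxeter system with finite index set B, and consider the lazy simple random walk on W started at the identity (at each step multiply on the right by a simple reflection or by the identity, each uniformly). For all n : ℕ and all w, w' ∈ W, if w ≤_B w' in the right weak Bruhat order, then N n w' ≤ N n w; that is, the walk is at least as likely to be at w as at w' after n steps. -/
/-!
By transitivity it suffices to compare the endpoints `w` and `w * s` where `ℓ (w * s) = ℓ w + 1`.
Put `t = w * s * w⁻¹`, a reflection with `t * (w * s) = w`. A walk is reflected in the wall of `t`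
as follows: at the first time when the current position `g` is adjacent to the wall, that is
`g⁻¹ * t * g = s i` for some `i`, and the next step is either lazy or equal to `s i` (so that the
walk either waits at the wall or crosses it), these two possibilities are interchanged
(`reflectWalk`). This is an involution, since simple reflections with different indices are
different (`simple_injective`, proved with the geometric representation). If such a time exists,
the endpoint gets multiplied by `t` on the left (`prod_reflectWalk`).

Such a time always exists for walks ending at `w * s`: the parity of the number of occurrences of
`t` in the inversion sequence of a word depends only on the group element represented by that word
(`natCast_count_rightInvSeq_eq`), and it is odd for the reduced word of `w * s` that ends in `s`.
So reflection maps walks to `w * s` injectively to walks to `w`.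
-/

/-- The number of lazy walks of length `n` (each step an element of `Option B`,
interpreted as `1` for `none` and the simple reflection `cs.simple i` for `some i`)
whose steps multiply, in order, to `w`. -/
noncomputable def lazyWalkCount {B W : Type*} [Group W] {M : CoxeterMatrix B}
    (cs : CoxeterSystem M W) (n : ℕ) (w : W) : ℕ :=
  Nat.card {f : Fin n → Option B //
    (List.ofFn fun j => ((f j).elim 1 cs.simple)).prod = w}

open Polynomial.Chebyshev in
/-- If `r₁, r₂` are reflections whose composition has trace parameter `2 cos (2π / m)`, then
`(r₁ r₂) ^ m = 1`. The case `m = 2` is separate because there `sin (2π / m) = 0`, and the parameter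
alone does not determine whether the reflections commute. -/
lemma reflection_mul_reflection_pow_eq_one {V : Type*} [AddCommGroup V] [Module ℝ V] {x y : V}
    {f g : Module.Dual ℝ V} (hf : f x = 2) (hg : g y = 2) (m : ℕ) (hm : 2 ≤ m)
    (hfy : f y = -2 * Real.cos (Real.pi / m)) (hgx : g x = -2 * Real.cos (Real.pi / m)) :
    (Module.reflection hf * Module.reflection hg) ^ m = 1 := by
  ext z
  obtain rfl | hm3 := hm.eq_or_lt
  · have h1 : f y = 0 := by simpa using hfy
    have h2 : g x = 0 := by simpa using hgx
    simp only [pow_two, LinearEquiv.mul_apply, Module.reflection_apply, map_sub, map_smul, h1, h2,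
      hf, hg, LinearEquiv.coe_one, id_eq]
    module
  set θ : ℝ := 2 * (Real.pi / m) with hθ
  have ht : 2 * Real.cos θ = f y * g x - 2 := by
    rw [hfy, hgx, hθ, Real.cos_two_mul]; ring
  have hm0 : (3 : ℝ) ≤ m := by exact_mod_cast hm3
  have hmθ : m * θ = 2 * Real.pi := by rw [hθ]; field_simp
  have hs : Real.sin θ ≠ 0 := by
    refine (Real.sin_pos_of_pos_of_lt_pi (by positivity) ?_).ne'
    nlinarith [Real.pi_pos]
  rw [Module.reflection_mul_reflection_pow_apply hf hg m z _ ht]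
  obtain ⟨p, rfl | rfl⟩ := m.even_or_odd'
  · have h0 : (S ℝ ((p : ℤ) - 1)).eval (2 * Real.cos θ) = 0 := by
      apply (mul_eq_zero_iff_right hs).1
      rw [S_two_mul_real_cos]
      have : (((p : ℤ) - 1 : ℤ) + 1 : ℝ) * θ = Real.pi := by push_cast at hmθ ⊢; linarith
      rw [this, Real.sin_pi]
    have e1 : (((2 * p : ℕ) : ℤ) - 2) / 2 = p - 1 := by omega
    have e2 : (((2 * p : ℕ) : ℤ) - 1) / 2 = p - 1 := by omega
    rw [e1, e2, h0]
    simp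
  · have h0 : (S ℝ (p : ℤ)).eval (2 * Real.cos θ) + (S ℝ ((p : ℤ) - 1)).eval (2 * Real.cos θ) = 0 := by
      apply (mul_eq_zero_iff_right hs).1
      rw [add_mul, S_two_mul_real_cos, S_two_mul_real_cos]
      have : (((p : ℤ) : ℝ) + 1) * θ = 2 * Real.pi - (((p : ℤ) - 1 : ℤ) + 1 : ℝ) * θ := by
        push_cast at hmθ ⊢; linarith
      rw [this, Real.sin_two_pi_sub]
      ring
    have e1 : (((2 * p + 1 : ℕ) : ℤ) - 2) / 2 = p - 1 := by omega
    have e2 : (((2 * p + 1 : ℕ) : ℤ) - 1) / 2 = p := by omega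
    have e3 : (((2 * p + 1 : ℕ) : ℤ) - 3) / 2 = p - 1 := by omega
    have e4 : ((2 * p + 1 : ℕ) : ℤ) / 2 = p := by omega
    rw [e1, e2, e3, e4, h0]
    simp

namespace CoxeterSystem

variable {B W : Type*} [Group W] {M : CoxeterMatrix B} (cs : CoxeterSystem M W)

/-! ### Distinctness of the simple reflections -/

/-- The geometric representation sends the two simple reflections to reflections in different
basis vectors. When `M i j = 0`, encoding order `∞`, the junk value `π / 0 = 0` gives the
customary coefficient `-2`. -/
theorem simple_injective : Function.Injective cs.simple := by
  let f (i : B) : Module.Dual ℝ (B →₀ ℝ) :=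
    Finsupp.linearCombination ℝ fun j => -2 * Real.cos (Real.pi / M i j)
  have hfx (i j : B) : f i (Finsupp.single j 1) = -2 * Real.cos (Real.pi / M i j) := by simp [f]
  have hf (i : B) : f i (Finsupp.single i 1) = 2 := by simp [hfx]
  have hlift : M.IsLiftable fun i => Module.reflection (hf i) := by
    intro i j
    by_cases hij : i = j
    · subst hij
      rw [M.diagonal, pow_one]
      ext1 z
      exact Module.involutive_reflection (hf i) z
    · by_cases h0 : M i j = 0
      · rw [h0, pow_zero]
      · have h1 := M.off_diagonal i j hij
        exact reflection_mul_reflection_pow_eq_one (hf i) (hf j) (M i j) (by omega) (hfx i j)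
          (by rw [hfx, M.symmetric])
  intro i j h
  by_contra hij
  have key := congrArg (fun w => cs.lift ⟨_, hlift⟩ w (Finsupp.single i 1)) h
  simp only [lift_apply_simple, Module.reflection_apply] at key
  have := DFunLike.congr_fun key i
  have hji : Finsupp.single j (1 : ℝ) i = 0 := Finsupp.single_eq_of_ne hij
  simp only [Finsupp.coe_sub, Pi.sub_apply, Finsupp.smul_apply, hf, hji, smul_eq_mul,
    Finsupp.single_eq_same] at this
  norm_num at this

/-! ### Parity of inversion sequences -/

open Classical in
/-- The action of the `i`-th generator on pairs of a group element and a sign: conjugate the element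
by `s i`, and flip the sign if the element is `s i`. (Usually this is defined on pairs whose first
component is a reflection; the same formulas work on all of `W`.) -/
noncomputable def signAct (i : B) : Function.End (W × ZMod 2) := fun p =>
  (cs.simple i * p.1 * cs.simple i, p.2 + if p.1 = cs.simple i then 1 else 0)

open Classical in
lemma prod_map_signAct (ω : List B) (t : W) (e : ZMod 2) :
    (ω.map cs.signAct).prod (t, e) =
      (cs.wordProd ω * t * (cs.wordProd ω)⁻¹, e + ((cs.rightInvSeq ω).count t : ZMod 2)) := by
  induction ω with
  | nil =>
    change (t, e) = _
    simp
  | cons i ω ih =>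
    rw [List.map_cons, List.prod_cons]
    change cs.signAct i ((ω.map cs.signAct).prod (t, e)) = _
    rw [ih]
    have h : cs.wordProd ω * t * (cs.wordProd ω)⁻¹ = cs.simple i ↔
        (cs.wordProd ω)⁻¹ * cs.simple i * cs.wordProd ω = t := by
      constructor
      · intro h; rw [← h]; group
      · intro h; rw [← h]; group
    simp only [signAct, rightInvSeq, wordProd_cons, List.count_cons, beq_iff_eq, h]
    refine Prod.ext ?_ ?_
    · simp [mul_assoc]
    · by_cases h' : (cs.wordProd ω)⁻¹ * cs.simple i * cs.wordProd ω = t <;> simp [h', add_assoc]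

lemma reverse_alternatingWord_two_mul (i j : B) (m : ℕ) :
    (alternatingWord i j (2 * m)).reverse = alternatingWord j i (2 * m) := by
  induction m with
  | zero => rfl
  | succ m ih =>
    rw [show 2 * (m + 1) = 2 * m + 1 + 1 by ring, alternatingWord_succ i j, alternatingWord_succ j i,
      alternatingWord_succ' j i, alternatingWord_succ' j i]
    simp [ih]

/-- The inversion sequence of the word `(s i * s j) ^ M i j` consists of two equal halves. -/
lemma even_count_rightInvSeq_alternatingWord [DecidableEq W] (i j : B) (t : W) :
    Even ((cs.rightInvSeq (alternatingWord i j (2 * M i j))).count t) := by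
  rw [← List.count_reverse, ← leftInvSeq_reverse, reverse_alternatingWord_two_mul]
  set L := cs.leftInvSeq (alternatingWord j i (2 * M i j)) with hL
  have hlen : L.length = 2 * M i j := by simp [hL]
  have : L.take (M i j) = L.drop (M i j) := by
    apply List.ext_getElem
    · simp [hlen]; omega
    · intro k h1 h2
      simp only [List.length_take, List.length_drop, hlen] at h1 h2
      rw [List.getElem_take, List.getElem_drop]
      simp only [hL]
      rw [cs.getElem_leftInvSeq_alternatingWord j i (M i j) k (by omega),
        cs.getElem_leftInvSeq_alternatingWord j i (M i j) (M i j + k) (by omega),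
        prod_alternatingWord_eq_mul_pow, prod_alternatingWord_eq_mul_pow,
        show (2 * (M i j + k) + 1) / 2 = M i j + k by omega,
        show (2 * k + 1) / 2 = k by omega, pow_add, simple_mul_simple_pow, one_mul]
      simp
  rw [← List.take_append_drop (M i j) L, List.count_append, this]
  exact Even.add_self _

lemma isLiftable_signAct : M.IsLiftable cs.signAct := by
  classical
  intro i j
  have hpow (m : ℕ) : (cs.signAct i * cs.signAct j) ^ m =
      ((alternatingWord i j (2 * m)).map cs.signAct).prod := by
    induction m with
    | zero => simp [alternatingWord]
    | succ m ih =>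
      rw [show 2 * (m + 1) = 2 * m + 1 + 1 by ring, alternatingWord_succ', alternatingWord_succ',
        pow_succ', ih]
      simp [mul_assoc]
  rw [hpow]
  funext ⟨t, e⟩
  change _ = (t, e)
  rw [prod_map_signAct, (ZMod.natCast_eq_zero_iff_even).2
    (cs.even_count_rightInvSeq_alternatingWord i j t), prod_alternatingWord_eq_mul_pow]
  simp

lemma natCast_count_rightInvSeq_eq [DecidableEq W] {ω ω' : List B}
    (h : cs.wordProd ω = cs.wordProd ω') (t : W) :
    ((cs.rightInvSeq ω).count t : ZMod 2) = (cs.rightInvSeq ω').count t := by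
  have key (ω : List B) :
      cs.lift ⟨_, cs.isLiftable_signAct⟩ (cs.wordProd ω) = (ω.map cs.signAct).prod := by
    rw [wordProd, map_list_prod, List.map_map]
    congr 2
    funext i
    simp
  have h2 := congrFun ((key ω).symm.trans ((congrArg _ h).trans (key ω'))) (t, 0)
  rw [prod_map_signAct, prod_map_signAct] at h2
  have h3 := congrArg Prod.snd h2
  simp only [zero_add] at h3
  convert h3

/-- Every word for `w * s i`, reduced or not, crosses the wall between `w` and `w * s i` when the
latter is longer. -/
lemma mem_leftInvSeq_of_length_lt {w : W} {i : B} (hw : cs.length (w * cs.simple i) = cs.length w + 1)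
    {ω : List B} (hω : cs.wordProd ω = w * cs.simple i) :
    w * cs.simple i * w⁻¹ ∈ cs.leftInvSeq ω := by
  classical
  obtain ⟨ω₀, hred, hw₀⟩ := cs.exists_isReduced w
  have hprod : cs.wordProd (ω₀.concat i) = w * cs.simple i := by rw [wordProd_concat, hw₀]
  have hred' : cs.IsReduced (ω₀.concat i) := by
    rw [IsReduced, hprod, hw, List.length_concat, hw₀, hred.eq]
  have hmem : w * cs.simple i * w⁻¹ ∈ cs.leftInvSeq (ω₀.concat i) := by
    rw [leftInvSeq_concat, hw₀]; simp
  have hcount := List.count_eq_one_of_mem hred'.nodup_leftInvSeq hmem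
  have h := cs.natCast_count_rightInvSeq_eq (ω := ω.reverse) (ω' := (ω₀.concat i).reverse)
    (by rw [wordProd_reverse, wordProd_reverse, hω, hprod]) (w * cs.simple i * w⁻¹)
  rw [rightInvSeq_reverse, rightInvSeq_reverse, List.count_reverse, List.count_reverse,
    hcount] at h
  by_contra hn
  rw [List.count_eq_zero_of_not_mem hn] at h
  simp at h

/-! ### Reflecting walks in a wall -/

/-- The endpoint of a lazy walk started at the identity. -/
def walkProd (l : List (Option B)) : W := (l.map fun a => a.elim 1 cs.simple).prod

lemma walkProd_eq_wordProd (l : List (Option B)) :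
    cs.walkProd l = cs.wordProd l.reduceOption := by
  induction l with
  | nil => simp [walkProd]
  | cons a l ih =>
    cases a <;> simp_all [walkProd, wordProd]

open Classical in
/-- The reflection of a lazy walk in the wall of `t`: at the first time when the walk is adjacent to
the wall and either waits or crosses, interchange waiting and crossing, leaving all other steps
unchanged. The recursion moves the starting point back to the identity after each step by
conjugating `t`, so that adjacency to the wall means that `t` is a simple reflection. -/
noncomputable def reflectWalk : W → List (Option B) → List (Option B)
  | _, [] => []
  | t, none :: l => if h : ∃ i, cs.simple i = t then some h.choose :: l else
      none :: reflectWalk t l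
  | t, some i :: l => if cs.simple i = t then none :: l else
      some i :: reflectWalk (cs.simple i * t * cs.simple i) l

lemma length_reflectWalk (t : W) (l : List (Option B)) :
    (cs.reflectWalk t l).length = l.length := by
  induction l generalizing t with
  | nil => rfl
  | cons a l ih =>
    cases a with
    | none => rw [reflectWalk]; split_ifs <;> simp [ih]
    | some i => rw [reflectWalk]; split_ifs <;> simp [ih]

lemma involutive_reflectWalk (t : W) : Function.Involutive (cs.reflectWalk t) := by
  intro l
  induction l generalizing t with
  | nil => rfl
  | cons a l ih =>
    cases a with
    | none =>
      by_cases h : ∃ i, cs.simple i = t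
      · rw [reflectWalk, dif_pos h, reflectWalk, if_pos h.choose_spec]
      · rw [reflectWalk, dif_neg h, reflectWalk, dif_neg h, ih]
    | some i =>
      by_cases h : cs.simple i = t
      · have h' : ∃ j, cs.simple j = t := ⟨i, h⟩
        rw [reflectWalk, if_pos h, reflectWalk, dif_pos h',
          cs.simple_injective (h'.choose_spec.trans h.symm)]
      · rw [reflectWalk, if_neg h, reflectWalk, if_neg h, ih]

/-- The hypothesis says that the walk crosses the wall of `t` at some time. -/
lemma prod_reflectWalk (t : W) (l : List (Option B)) (h : t ∈ cs.leftInvSeq l.reduceOption) :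
    cs.walkProd (cs.reflectWalk t l) = t * cs.walkProd l := by
  induction l generalizing t with
  | nil => simp at h
  | cons a l ih =>
    cases a with
    | none =>
      by_cases hs : ∃ i, cs.simple i = t
      · rw [reflectWalk, dif_pos hs]
        simp [walkProd, hs.choose_spec]
      · rw [reflectWalk, dif_neg hs]
        simpa [walkProd] using ih t (by simpa using h)
    | some i =>
      by_cases hs : cs.simple i = t
      · rw [reflectWalk, if_pos hs]
        simp [walkProd, ← hs]
      · rw [reflectWalk, if_neg hs]
        have hmem : cs.simple i * t * cs.simple i ∈ cs.leftInvSeq l.reduceOption := by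
          rw [List.reduceOption_cons_of_some, leftInvSeq, List.mem_cons, List.mem_map] at h
          obtain h | ⟨u, hu, rfl⟩ := h
          · exact absurd h.symm hs
          · simpa [mul_assoc] using hu
        have := ih _ hmem
        simp only [walkProd, List.map_cons, List.prod_cons, Option.elim_some] at this ⊢
        rw [this]
        simp [mul_assoc]

/-! ### Comparison of walk counts -/

/-- The comparison for a covering relation of the weak order. -/
lemma lazyWalkCount_mul_simple_le [Finite B] (n : ℕ) {w : W} {i : B}
    (hw : cs.length (w * cs.simple i) = cs.length w + 1) :
    lazyWalkCount cs n (w * cs.simple i) ≤ lazyWalkCount cs n w := by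
  set t := w * cs.simple i * w⁻¹ with ht
  have hwalk (f : Fin n → Option B) :
      (List.ofFn fun j => (f j).elim 1 cs.simple).prod = cs.walkProd (List.ofFn f) := by
    rw [walkProd, List.map_ofFn]; rfl
  have hlen (f : Fin n → Option B) : (cs.reflectWalk t (List.ofFn f)).length = n := by
    rw [length_reflectWalk, List.length_ofFn]
  let φ (f : Fin n → Option B) (j : Fin n) : Option B :=
    (cs.reflectWalk t (List.ofFn f))[(j : ℕ)]'(by rw [hlen]; exact j.2)
  have hφ (f : Fin n → Option B) : List.ofFn (φ f) = cs.reflectWalk t (List.ofFn f) := by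
    apply List.ext_getElem
    · rw [List.length_ofFn, hlen]
    · intro k h1 h2
      simp [φ]
  have hmaps (f : Fin n → Option B)
      (hf : (List.ofFn fun j => (f j).elim 1 cs.simple).prod = w * cs.simple i) :
      (List.ofFn fun j => (φ f j).elim 1 cs.simple).prod = w := by
    rw [hwalk] at hf ⊢
    rw [hφ, prod_reflectWalk, hf, ht]
    · simp [mul_assoc]
    · exact cs.mem_leftInvSeq_of_length_lt hw (by rw [← walkProd_eq_wordProd, hf])
  refine Nat.card_le_card_of_injective (fun f => ⟨φ f.1, hmaps f.1 f.2⟩) ?_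
  rintro ⟨f, hf⟩ ⟨g, hg⟩ h
  have h' : φ f = φ g := congrArg Subtype.val h
  have h2 := congrArg List.ofFn h'
  rw [hφ, hφ] at h2
  exact Subtype.ext (List.ofFn_injective ((cs.involutive_reflectWalk t).injective h2))

end CoxeterSystem

/-- For the lazy simple random walk on a Coxeter group, the likelihoods of states
respect the right weak Bruhat order: if `w ≤_B w'` then after any number of steps
the walk is at least as likely to be at `w` as at `w'`. -/
theorem lazyWalkCount_le_of_weak_bruhat_le {B W : Type*} [Fintype B] [Group W]
    {M : CoxeterMatrix B} (cs : CoxeterSystem M W) (n : ℕ) (w w' : W)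
    (h : cs.length w + cs.length (w⁻¹ * w') = cs.length w') :
    lazyWalkCount cs n w' ≤ lazyWalkCount cs n w := by
  induction hk : cs.length (w⁻¹ * w') generalizing w' with
  | zero =>
    rw [cs.length_eq_zero_iff, inv_mul_eq_one] at hk
    rw [hk]
  | succ k ih =>
    have hne : w⁻¹ * w' ≠ 1 := by
      intro h1
      rw [h1, cs.length_one] at hk
      omega
    obtain ⟨i, hi⟩ := cs.exists_rightDescent_of_ne_one hne
    rw [cs.isRightDescent_iff, mul_assoc] at hi
    -- The triangle inequality forces `w' * s i` to lie between `w` and `w'` in the weak order.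
    have h1 := cs.length_mul_le w (w⁻¹ * (w' * cs.simple i))
    rw [mul_inv_cancel_left] at h1
    have h2 := cs.length_mul_simple w' i
    refine le_trans ?_ (ih (w' * cs.simple i) (by omega) (by omega))
    have h3 := cs.lazyWalkCount_mul_simple_le n (w := w' * cs.simple i) (i := i)
    rw [cs.simple_mul_simple_cancel_right] at h3
    exact h3 (by omega)
end

section
/- Let (W,S) be a Coxeter system, w, x ∈ W, and let s = s j and t = s i be simple reflections. Suppose d(x, w) < d(x, w * s) and d(x * t, w * s) < d(x * t, w) (so (x, x * t) is a grey edge for the pair (w, w * s)). Then left multiplication by the reflection w * s * w⁻¹ interchanges the endpoints of the edge: (w * s * w⁻¹) * x = x * t and (w * s * w⁻¹) * (x * t) = x. -/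
/-! Put `u = x⁻¹ * w`. The hypotheses say that `s = s j` is not a right descent of `u`, but is one
of `t * u`, and the claim is equivalent to `u * s * u⁻¹ = t`.

The proof uses the reflection cocycle: for a word `ω` and `r : W`, the parity of the number of
occurrences of `r` in the right inversion sequence of `ω` depends only on the product of `ω`. To
see this, let `s i` act on `W × ZMod 2` by conjugation on the first coordinate, adding `1` to the
second one exactly when the first is `s i` (`reflStep`). A word then acts by conjugation by its
product, together with a shift by the count in question (`prod_map_reflStep`). The braid relations
hold since the inversion sequence of `(s i * s i') ^ m` with `m = M i i'` is some list repeated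
twice (`reflStep_isLiftable`). Hence `W` itself acts, by `reflAct`.

If `s` occurs in the inversion sequence of a reduced word then `s` is a descent; with the cocycle
identity for `u` and `u * s` this shows that the parity of `(u, s)` is `1` exactly when `s` is a
right descent of `u`. Passing from `u` to `t * u` changes the parity of `(u, s)` only if
`u * s * u⁻¹ = t`, and by hypothesis it does change. -/

namespace GreyEdge

open CoxeterSystem
open scoped Classical

variable {B W : Type*} [Group W] {M : CoxeterMatrix B} (cs : CoxeterSystem M W)

/-- The action of a simple reflection on `W × ZMod 2`: conjugation by `s i` on the first
coordinate, and a change of the second coordinate exactly at `r = s i`. All of `W` is used in place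
of the set of reflections; this makes no difference to the argument. -/
noncomputable def reflStep (i : B) : Function.End (W × ZMod 2) := fun p =>
  (cs.simple i * p.1 * (cs.simple i)⁻¹, p.2 + if p.1 = cs.simple i then 1 else 0)

theorem end_mul_apply {α : Type*} (f g : Function.End α) (a : α) : (f * g) a = f (g a) := rfl

theorem prod_map_reflStep (ω : List B) (p : W × ZMod 2) :
    (ω.map (reflStep cs)).prod p =
      (cs.wordProd ω * p.1 * (cs.wordProd ω)⁻¹, p.2 + ((cs.rightInvSeq ω).count p.1 : ZMod 2)) := by
  induction ω with
  | nil => simp [Function.End.one_def]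
  | cons i ω ih =>
    have key : (cs.wordProd ω * p.1 * (cs.wordProd ω)⁻¹ = cs.simple i) ↔
        ((cs.wordProd ω)⁻¹ * cs.simple i * cs.wordProd ω = p.1) := by
      constructor <;> intro h
      · rw [← h]; group
      · rw [← h]; group
    rw [List.map_cons, List.prod_cons, end_mul_apply, ih]
    simp only [reflStep, rightInvSeq, wordProd_cons, List.count_cons, beq_iff_eq, key]
    ext
    · simp [mul_assoc]
    · push_cast
      simp [add_assoc]

theorem prod_map_reverse_alternatingWord {G : Type*} [Monoid G] (f : B → G) (i i' : B) (m : ℕ) :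
    ((alternatingWord i i' (2 * m)).reverse.map f).prod = (f i' * f i) ^ m := by
  induction m with
  | zero => simp [alternatingWord]
  | succ m ih =>
    rw [Nat.mul_succ, alternatingWord_succ, alternatingWord_succ]
    simp only [List.concat_eq_append, List.reverse_append, List.map_append, List.prod_append, ih,
      pow_succ']
    simp [mul_assoc]

/-- The inversion sequence of the word of the braid relation is periodic with period
`M i i'`, half of its length, so every element occurs an even number of times. -/
theorem count_leftInvSeq_alternatingWord (i i' : B) (r : W) :
    (((cs.leftInvSeq (alternatingWord i i' (2 * M i i'))).count r : ℕ) : ZMod 2) = 0 := by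
  set L := cs.leftInvSeq (alternatingWord i i' (2 * M i i')) with hL
  have hlen : L.length = 2 * M i i' := by simp [hL]
  have hper : L.drop (M i i') = L.take (M i i') := by
    apply List.ext_getElem
    · simp [hlen]; omega
    · intro k h₁ h₂
      have hk : k < M i i' := by simp [hlen] at h₂; omega
      rw [List.getElem_drop, List.getElem_take]
      simp only [hL]
      rw [getElem_leftInvSeq_alternatingWord _ _ _ _ _ (by omega),
        getElem_leftInvSeq_alternatingWord _ _ _ _ _ (by omega)]
      have hpow : (cs.simple i' * cs.simple i) ^ M i i' = 1 := cs.simple_mul_simple_pow' i i'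
      have h3 : (2 * (M i i' + k) + 1) / 2 = M i i' + k := by omega
      have h4 : (2 * k + 1) / 2 = k := by omega
      simp [prod_alternatingWord_eq_mul_pow, h3, h4, pow_add, hpow]
  rw [← List.take_append_drop (M i i') L, hper, List.count_append, Nat.cast_add]
  exact CharTwo.add_self_eq_zero _

theorem reflStep_isLiftable : M.IsLiftable (reflStep cs) := by
  intro i i'
  rw [← prod_map_reverse_alternatingWord]
  funext p
  rw [prod_map_reflStep, rightInvSeq_reverse, List.count_reverse, M.symmetric i i',
    count_leftInvSeq_alternatingWord]
  simp [prod_alternatingWord_eq_mul_pow, Function.End.one_def]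

/-- The action of `W` on `W × ZMod 2` generated by `reflStep`. -/
noncomputable def reflAct : W →* Function.End (W × ZMod 2) :=
  cs.lift ⟨reflStep cs, reflStep_isLiftable cs⟩

theorem reflAct_simple (i : B) : reflAct cs (cs.simple i) = reflStep cs i :=
  cs.lift_apply_simple (reflStep_isLiftable cs) i

theorem reflAct_wordProd (ω : List B) (p : W × ZMod 2) :
    reflAct cs (cs.wordProd ω) p =
      (cs.wordProd ω * p.1 * (cs.wordProd ω)⁻¹, p.2 + ((cs.rightInvSeq ω).count p.1 : ZMod 2)) := by
  have h : reflAct cs ∘ cs.simple = reflStep cs := funext (reflAct_simple cs)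
  rw [← prod_map_reflStep, wordProd, map_list_prod, List.map_map, h]

/-- The reflection cocycle: the parity of the number of occurrences of `r` in the right inversion
sequence of any word for `u`. -/
noncomputable def parity (u r : W) : ZMod 2 := (reflAct cs u (r, 0)).2

theorem reflAct_apply (u r : W) (e : ZMod 2) :
    reflAct cs u (r, e) = (u * r * u⁻¹, e + parity cs u r) := by
  obtain ⟨ω, rfl⟩ := cs.wordProd_surjective u
  simp [parity, reflAct_wordProd]

theorem parity_mul (u v r : W) :
    parity cs (u * v) r = parity cs v r + parity cs u (v * r * v⁻¹) := by
  rw [parity, map_mul, end_mul_apply, reflAct_apply, reflAct_apply,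
    zero_add]

theorem parity_simple (i : B) (r : W) :
    parity cs (cs.simple i) r = if r = cs.simple i then 1 else 0 := by
  simp [parity, reflAct_simple, reflStep]

theorem length_mul_lt_of_parity_ne_zero {u r : W} (h : parity cs u r ≠ 0) :
    cs.length (u * r) < cs.length u := by
  obtain ⟨ω, hω, rfl⟩ := cs.exists_isReduced u
  refine (cs.isRightInversion_of_mem_rightInvSeq hω ?_).2
  by_contra hr
  exact h (by simp [parity, reflAct_wordProd, List.count_eq_zero_of_not_mem hr])

theorem parity_simple_ne_zero_iff (u : W) (j : B) :
    parity cs u (cs.simple j) ≠ 0 ↔ cs.length (u * cs.simple j) < cs.length u := by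
  refine ⟨length_mul_lt_of_parity_ne_zero cs, fun h h0 => ?_⟩
  have h1 : parity cs (u * cs.simple j) (cs.simple j) ≠ 0 := by
    rw [parity_mul, parity_simple]
    simp [h0]
  have h2 := length_mul_lt_of_parity_ne_zero cs h1
  rw [simple_mul_simple_cancel_right] at h2
  exact lt_asymm h h2

end GreyEdge


/-- Left multiplication by the reflection `w * s * w⁻¹` interchanges the endpoints of
any grey edge `(x, x * t)` for the pair `(w, w * s)` (distance `d(x, y) = ℓ(x⁻¹ * y)`). -/
theorem reflection_swaps_grey_edge {B W : Type*} [Group W] {M : CoxeterMatrix B}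
    (cs : CoxeterSystem M W) (w x : W) (j i : B)
    (h1 : cs.length (x⁻¹ * w) < cs.length (x⁻¹ * (w * cs.simple j)))
    (h2 : cs.length ((x * cs.simple i)⁻¹ * (w * cs.simple j)) <
      cs.length ((x * cs.simple i)⁻¹ * w)) :
    (w * cs.simple j * w⁻¹) * x = x * cs.simple i ∧
    (w * cs.simple j * w⁻¹) * (x * cs.simple i) = x := by
  have hu : ¬ GreyEdge.parity cs (x⁻¹ * w) (cs.simple j) ≠ 0 := by
    rw [GreyEdge.parity_simple_ne_zero_iff, mul_assoc]
    exact lt_asymm h1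
  have htu : GreyEdge.parity cs (cs.simple i * (x⁻¹ * w)) (cs.simple j) ≠ 0 := by
    rw [GreyEdge.parity_simple_ne_zero_iff]
    simpa [mul_assoc] using h2
  rw [GreyEdge.parity_mul, not_not.mp hu, zero_add, GreyEdge.parity_simple] at htu
  have key : x⁻¹ * w * cs.simple j * (x⁻¹ * w)⁻¹ = cs.simple i := by
    by_contra hne
    exact htu (if_neg hne)
  have hx : (w * cs.simple j * w⁻¹) * x = x * cs.simple i := by
    rw [← key]
    group
  refine ⟨hx, ?_⟩
  rw [← mul_assoc, hx, CoxeterSystem.simple_mul_simple_cancel_right]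
end

section
/- Let (W,S) be a Coxeter system with finite index set B, and let l be a reduced word, i.e. a list of indices with ℓ(π l) = length of l, where π l denotes the product of the corresponding simple reflections. Then walk probabilities decrease along the geodesic determined by l: for all k₁ ≤ k₂ ≤ length of l and every n : ℕ, N n (π (l.take k₂)) ≤ N n (π (l.take k₁)). -/
namespace LazyWalk

open CoxeterSystem

/-! ### The action on `W × ZMod 2` and the inversion parity -/

section Parity

open scoped Classical in
/-- The permutation `(t, e) ↦ (s i * t * s i, e + [t = s i])` of `W × ZMod 2`. The first factor is
all of `W` rather than the set of reflections, which makes no difference to the relations. -/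
noncomputable def invPerm {B W : Type*} [Group W] {M : CoxeterMatrix B}
    (cs : CoxeterSystem M W) (i : B) : Equiv.Perm (W × ZMod 2) :=
  Function.Involutive.toPerm
    (fun p => (cs.simple i * p.1 * cs.simple i, p.2 + if p.1 = cs.simple i then 1 else 0)) (by
      rintro ⟨t, e⟩
      have h : cs.simple i * t * cs.simple i = cs.simple i ↔ t = cs.simple i := by
        constructor
        · intro h
          have := congrArg (fun x => cs.simple i * x * cs.simple i) h
          simpa [mul_assoc] using this
        · rintro rfl; simp
      ext
      · simp [mul_assoc]
      · by_cases ht : t = cs.simple i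
        · simp [ht, add_assoc, CharTwo.add_self_eq_zero]
        · simp [h, ht])

variable {B W : Type*} [Group W] {M : CoxeterMatrix B} (cs : CoxeterSystem M W)

open scoped Classical in
lemma invPerm_apply (i : B) (p : W × ZMod 2) :
    invPerm cs i p =
      (cs.simple i * p.1 * cs.simple i, p.2 + if p.1 = cs.simple i then 1 else 0) := rfl

open scoped Classical in
/-- The sum counts occurrences of `t` in the right inversion sequence of the alternating word
of length `2 * n` in `i` and `j`. -/
lemma invPerm_mul_pow_apply (i j : B) (n : ℕ) (t : W) (e : ZMod 2) :
    ((invPerm cs i * invPerm cs j) ^ n) (t, e) =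
      ((cs.simple i * cs.simple j) ^ n * t * (cs.simple j * cs.simple i) ^ n,
        e + ∑ k ∈ Finset.range (2 * n),
          if t = (cs.simple j * cs.simple i) ^ k * cs.simple j then 1 else 0) := by
  induction n with
  | zero => simp
  | succ n ih =>
    set a := cs.simple i with ha
    set b := cs.simple j with hb
    have ha' : a⁻¹ = a := cs.inv_simple i
    have hb' : b⁻¹ = b := cs.inv_simple j
    have hinv : ((b * a) ^ n)⁻¹ = (a * b) ^ n := by
      rw [← inv_pow, mul_inv_rev, ha', hb']
    have hinv' : ((a * b) ^ n)⁻¹ = (b * a) ^ n := by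
      rw [← hinv, inv_inv]
    -- conjugating by `b` inverts `a * b`
    have hsc : b * (a * b) ^ n = (b * a) ^ n * b :=
      (SemiconjBy.pow_right (show SemiconjBy b (a * b) (b * a) by
        simp [SemiconjBy, mul_assoc]) n).eq
    have hconj (x : W) : (a * b) ^ n * t * (b * a) ^ n = x ↔
        t = (b * a) ^ n * x * (a * b) ^ n := by
      rw [← eq_mul_inv_iff_mul_eq, hinv, ← eq_inv_mul_iff_mul_eq, hinv', mul_assoc]
    have h1 : (a * b) ^ n * t * (b * a) ^ n = b ↔ t = (b * a) ^ (2 * n) * b := by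
      rw [hconj, two_mul, pow_add, mul_assoc, mul_assoc, hsc]
    have h2 : b * ((a * b) ^ n * t * (b * a) ^ n) * b = a ↔ t = (b * a) ^ (2 * n + 1) * b := by
      rw [← eq_mul_inv_iff_mul_eq, ← eq_inv_mul_iff_mul_eq, hb', hconj,
        show 2 * n + 1 = n + 1 + n by ring, pow_add, pow_succ, mul_assoc _ _ b, ← hsc]
      simp only [mul_assoc]
    rw [pow_succ', Equiv.Perm.mul_apply, ih, Equiv.Perm.mul_apply, invPerm_apply, invPerm_apply,
      show 2 * (n + 1) = 2 * n + 1 + 1 by ring, Finset.sum_range_succ, Finset.sum_range_succ]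
    simp only [← ha, ← hb, h1, h2]
    ext
    · simp only [pow_succ' (a * b), pow_succ (b * a), mul_assoc]
    · simp only [add_assoc]

lemma invPerm_isLiftable : M.IsLiftable (invPerm cs) := by
  classical
  intro i j
  ext1 ⟨t, e⟩
  rw [invPerm_mul_pow_apply, cs.simple_mul_simple_pow, cs.simple_mul_simple_pow', two_mul,
    Finset.sum_range_add]
  -- the inversions are periodic with period `M i j`, so each occurs an even number of times
  simp only [pow_add, cs.simple_mul_simple_pow', one_mul, mul_one, CharTwo.add_self_eq_zero,
    add_zero, Equiv.Perm.one_apply]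

/-- The action of `W` on `W × ZMod 2` extending `invPerm`. -/
noncomputable def invAction : W →* Equiv.Perm (W × ZMod 2) :=
  cs.lift ⟨invPerm cs, invPerm_isLiftable cs⟩

/-- The parity of the number of occurrences of `t` in the right inversion sequence of a word
for `w`; for a reflection `t` it is `1` exactly when `t` is a right inversion of `w`. -/
noncomputable def invParity (w t : W) : ZMod 2 := (invAction cs w (t, 0)).2

lemma invAction_fst (w : W) (p : W × ZMod 2) : (invAction cs w p).1 = w * p.1 * w⁻¹ := by
  induction w using cs.simple_induction_left with
  | one => simp
  | mul_simple_left w i ih =>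
    rw [map_mul, Equiv.Perm.mul_apply, invAction, cs.lift_apply_simple, invPerm_apply]
    change cs.simple i * (invAction cs w p).1 * cs.simple i = _
    rw [ih]
    simp [mul_assoc]

lemma invParity_one (t : W) : invParity cs 1 t = 0 := by simp [invParity]

open scoped Classical in
lemma invParity_simple_mul (j : B) (w t : W) :
    invParity cs (cs.simple j * w) t =
      invParity cs w t + if w * t * w⁻¹ = cs.simple j then 1 else 0 := by
  have h := invAction_fst cs w (t, 0)
  unfold invParity
  rw [map_mul, Equiv.Perm.mul_apply]
  conv_lhs => enter [1, 1]; rw [invAction, cs.lift_apply_simple]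
  rw [invPerm_apply, h]

lemma mem_rightInvSeq_of_invParity_ne_zero (ω : List B) (t : W)
    (h : invParity cs (cs.wordProd ω) t ≠ 0) : t ∈ cs.rightInvSeq ω := by
  classical
  induction ω with
  | nil => simp [invParity_one] at h
  | cons i ω ih =>
    rw [cs.wordProd_cons, invParity_simple_mul] at h
    rw [rightInvSeq, List.mem_cons]
    by_cases hc : cs.wordProd ω * t * (cs.wordProd ω)⁻¹ = cs.simple i
    · left
      rw [← hc]
      simp [mul_assoc]
    · right
      rw [if_neg hc, add_zero] at h
      exact ih h

/-- The half-space of `1` contains every `w` for which `i` is not a right descent. -/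
lemma invParity_eq_zero_of_not_isRightDescent (w : W) (i : B) (h : ¬ cs.IsRightDescent w i) :
    invParity cs w (cs.simple i) = 0 := by
  by_contra hne
  obtain ⟨ω, hω, rfl⟩ := cs.exists_isReduced w
  exact h (cs.isRightInversion_of_mem_rightInvSeq hω
    (mem_rightInvSeq_of_invParity_ne_zero cs ω _ hne)).2

lemma invParity_simple_self (i : B) : invParity cs (cs.simple i) (cs.simple i) ≠ 0 := by
  classical
  have h := invParity_simple_mul cs i 1 (cs.simple i)
  rw [mul_one, invParity_one] at h
  simp [h]

end Parity

/-! ### The geometric representation and injectivity of the simple reflections -/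

section Geometric

variable {B : Type*} (M : CoxeterMatrix B)

/-- Twice the pairing of the geometric representation with the basis vector `e i`, determined by
`e j ↦ -2 * cos (π / M i j)`. The value `-2` at `M i j = 0` (an infinite bond) comes from
`π / 0 = 0`, and the value at `j = i` is `2` because `M i i = 1`. -/
noncomputable def coroot (i : B) : Module.Dual ℝ (B →₀ ℝ) :=
  Finsupp.linearCombination ℝ fun j => -2 * Real.cos (Real.pi / M i j)

lemma coroot_single (i j : B) :
    coroot M i (Finsupp.single j 1) = -2 * Real.cos (Real.pi / M i j) := by
  simp [coroot]

lemma coroot_single_self (i : B) : coroot M i (Finsupp.single i 1) = 2 := by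
  simp [coroot_single]

/-- The reflection by which the `i`-th generator acts in the geometric representation. -/
noncomputable def geomReflection (i : B) : (B →₀ ℝ) ≃ₗ[ℝ] (B →₀ ℝ) :=
  Module.reflection (coroot_single_self M i)

open Polynomial.Chebyshev in
/-- Two reflections whose pairings are `-2 * cos (π / m)` generate a rotation of order dividing
`m`, also for `m = 2`, where the rotation is `-1` on their plane. -/
lemma reflection_mul_pow_eq_one {V : Type*} [AddCommGroup V] [Module ℝ V] {x y : V}
    {f g : Module.Dual ℝ V} (hf : f x = 2) (hg : g y = 2) (m : ℕ) (hm : 2 ≤ m)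
    (hfy : f y = -2 * Real.cos (Real.pi / m)) (hgx : g x = -2 * Real.cos (Real.pi / m)) :
    (Module.reflection hf * Module.reflection hg) ^ m = 1 := by
  ext z
  rw [Module.reflection_mul_reflection_pow_apply hf hg m z, LinearEquiv.coe_one, id_eq]
  obtain rfl | hm3 : m = 2 ∨ 3 ≤ m := by omega
  · have hfy0 : f y = 0 := by simpa using hfy
    have hgx0 : g x = 0 := by simpa using hgx
    norm_num [hfy0, hgx0]
    module
  · set θ := Real.pi / m with hθ
    have hm0 : (0 : ℝ) < m := by positivity
    have hmθ : m * θ = Real.pi := by rw [hθ]; field_simp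
    have hsin : Real.sin (2 * θ) ≠ 0 := by
      apply ne_of_gt
      apply Real.sin_pos_of_pos_of_lt_pi
      · positivity
      · have : (3 : ℝ) ≤ m := by exact_mod_cast hm3
        have : 0 < θ := by positivity
        nlinarith
    have ht : f y * g x - 2 = 2 * Real.cos (2 * θ) := by
      rw [hfy, hgx, Real.cos_two_mul]; ring
    rw [ht]
    have hS (n : ℤ) : (S ℝ n).eval (2 * Real.cos (2 * θ)) * Real.sin (2 * θ) =
        Real.sin ((n + 1) * (2 * θ)) := S_two_mul_real_cos (2 * θ) n
    obtain ⟨k, hk | hk⟩ := Nat.even_or_odd' m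
    · have e1 : ((m : ℤ) - 2) / 2 = k - 1 := by omega
      have e2 : ((m : ℤ) - 1) / 2 = k - 1 := by omega
      have h0 : (S ℝ (k - 1)).eval (2 * Real.cos (2 * θ)) = 0 := by
        have h := hS (k - 1)
        have : (((k - 1 : ℤ) : ℝ) + 1) * (2 * θ) = Real.pi := by
          rw [← hmθ, hk]; push_cast; ring
        rw [this, Real.sin_pi] at h
        exact (mul_eq_zero.mp h).resolve_right hsin
      rw [e1, e2, h0]
      simp
    · have e1 : ((m : ℤ) - 2) / 2 = k - 1 := by omega
      have e2 : ((m : ℤ) - 1) / 2 = k := by omega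
      have e3 : ((m : ℤ) - 3) / 2 = k - 1 := by omega
      have e4 : (m : ℤ) / 2 = k := by omega
      have h0 : (S ℝ k).eval (2 * Real.cos (2 * θ)) +
          (S ℝ (k - 1)).eval (2 * Real.cos (2 * θ)) = 0 := by
        have h := congrArg₂ (· + ·) (hS k) (hS (k - 1))
        have hmθ' : (2 * k + 1) * θ = Real.pi := by
          rw [← hmθ, hk]; push_cast; ring
        have a1 : (((k : ℤ) : ℝ) + 1) * (2 * θ) = θ + Real.pi := by
          rw [← hmθ']; push_cast; ring
        have a2 : (((k - 1 : ℤ) : ℝ) + 1) * (2 * θ) = Real.pi - θ := by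
          rw [← hmθ']; push_cast; ring
        simp only [a1, a2, Real.sin_add_pi, Real.sin_pi_sub, neg_add_cancel, ← add_mul] at h
        exact (mul_eq_zero.mp h).resolve_right hsin
      rw [e1, e2, e3, e4, h0]
      simp

lemma geomReflection_isLiftable : M.IsLiftable (geomReflection M) := by
  intro i j
  obtain rfl | hij := eq_or_ne i j
  · rw [M.diagonal, pow_one]
    ext1 z
    exact Module.involutive_reflection (coroot_single_self M i) z
  · obtain h0 | h2 : M i j = 0 ∨ 2 ≤ M i j := by
      have := M.off_diagonal i j hij
      omega
    · rw [h0, pow_zero]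
    · refine reflection_mul_pow_eq_one _ _ _ h2 (coroot_single M i j) ?_
      rw [coroot_single, M.symmetric]

theorem simple_injective {W : Type*} [Group W] {M : CoxeterMatrix B} (cs : CoxeterSystem M W) :
    Function.Injective cs.simple := by
  intro i j h
  by_contra hij
  have h' := congrArg (cs.lift ⟨geomReflection M, geomReflection_isLiftable M⟩) h
  rw [cs.lift_apply_simple, cs.lift_apply_simple] at h'
  have h'' := DFunLike.congr_fun (LinearEquiv.congr_fun h' (Finsupp.single i 1)) i
  rw [geomReflection, geomReflection, Module.reflection_apply_self, Module.reflection_apply] at h''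
  simp [Ne.symm hij] at h''
  norm_num at h''

end Geometric

/-! ### The reflection principle -/

section Walk

variable {B W : Type*} [Fintype B] [Group W] {M : CoxeterMatrix B} (cs : CoxeterSystem M W)

open scoped Classical in
lemma lazyWalkCount_eq_sum (n : ℕ) (w : W) :
    lazyWalkCount cs n w = ∑ f : Fin n → Option B,
      if (List.ofFn fun j => ((f j).elim 1 cs.simple)).prod = w then 1 else 0 := by
  rw [lazyWalkCount, Nat.card_eq_fintype_card, Fintype.card_subtype, Finset.card_filter]

lemma lazyWalkCount_succ (n : ℕ) (w : W) :
    lazyWalkCount cs (n + 1) w =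
      lazyWalkCount cs n w + ∑ j, lazyWalkCount cs n (cs.simple j * w) := by
  classical
  simp only [lazyWalkCount_eq_sum]
  rw [← (Fin.consEquiv fun _ : Fin (n + 1) => Option B).sum_comp, Fintype.sum_prod_type,
    Fintype.sum_option]
  have h (j : B) (x : W) : cs.simple j * x = w ↔ x = cs.simple j * w := by
    rw [← eq_inv_mul_iff_mul_eq, cs.inv_simple]
  simp [Fin.consEquiv, List.ofFn_succ, h]

/-- The mirror image of a vertex in the half-space of `1` is hit by at most as many walks. -/
lemma lazyWalkCount_mul_simple_le (i : B) (n : ℕ) (w : W)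
    (hw : invParity cs w (cs.simple i) = 0) :
    lazyWalkCount cs n (w * cs.simple i) ≤ lazyWalkCount cs n w := by
  classical
  induction n generalizing w with
  | zero =>
    have hne : w * cs.simple i ≠ 1 := by
      intro h
      rw [mul_eq_one_iff_eq_inv, cs.inv_simple] at h
      exact invParity_simple_self cs i (h ▸ hw)
    simp [lazyWalkCount_eq_sum, hne.symm]
  | succ n ih =>
    rw [lazyWalkCount_succ, lazyWalkCount_succ]
    have key (j : B) (hj : w * cs.simple i * w⁻¹ ≠ cs.simple j) :
        lazyWalkCount cs n (cs.simple j * (w * cs.simple i)) ≤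
          lazyWalkCount cs n (cs.simple j * w) := by
      rw [← mul_assoc]
      apply ih
      rw [invParity_simple_mul, hw, if_neg hj, add_zero]
    by_cases hex : ∃ j, w * cs.simple i * w⁻¹ = cs.simple j
    · obtain ⟨j₀, hj₀⟩ := hex
      have h1 : cs.simple j₀ * w = w * cs.simple i := by rw [← hj₀]; group
      have h2 : cs.simple j₀ * (w * cs.simple i) = w := by
        rw [← h1, cs.simple_mul_simple_cancel_left]
      rw [← Finset.add_sum_erase _ _ (Finset.mem_univ j₀),
        ← Finset.add_sum_erase (a := j₀) _ (fun j => lazyWalkCount cs n (cs.simple j * w))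
          (Finset.mem_univ j₀), h1, h2, ← add_assoc, ← add_assoc,
        add_comm (lazyWalkCount cs n w)]
      refine Nat.add_le_add_left (Finset.sum_le_sum fun j hj => key j ?_) _
      rw [hj₀]
      exact fun h => (Finset.ne_of_mem_erase hj) (simple_injective cs h).symm
    · push Not at hex
      exact Nat.add_le_add (ih w hw) (Finset.sum_le_sum fun j _ => key j (hex j))

end Walk

end LazyWalk

/-- For the lazy simple random walk on a Coxeter group, probabilities decrease along
any geodesic from the identity: if `l` is a reduced word, then for `k₁ ≤ k₂ ≤ l.length`
the walk is at least as likely to be at the product of the first `k₁` letters as at the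
product of the first `k₂` letters. -/
theorem lazyWalkCount_antitone_along_geodesic {B W : Type*} [Fintype B] [Group W]
    {M : CoxeterMatrix B} (cs : CoxeterSystem M W) (l : List B)
    (hl : cs.length (cs.wordProd l) = l.length)
    (k₁ k₂ : ℕ) (h₁₂ : k₁ ≤ k₂) (h₂ : k₂ ≤ l.length) (n : ℕ) :
    lazyWalkCount cs n (cs.wordProd (l.take k₂)) ≤
    lazyWalkCount cs n (cs.wordProd (l.take k₁)) := by
  have hred : cs.IsReduced l := hl
  induction k₂, h₁₂ using Nat.le_induction with
  | base => exact le_rfl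
  | succ k hk ih =>
    refine le_trans ?_ (ih (by omega))
    have hlt : k < l.length := by omega
    have hstep : cs.wordProd (l.take (k + 1)) = cs.wordProd (l.take k) * cs.simple l[k] := by
      rw [← List.take_concat_get' l k hlt, cs.wordProd_append, cs.wordProd_singleton]
    rw [hstep]
    apply LazyWalk.lazyWalkCount_mul_simple_le
    apply LazyWalk.invParity_eq_zero_of_not_isRightDescent
    have ha := (hred.take (k + 1)).eq
    have hb := (hred.take k).eq
    rw [List.length_take] at ha hb
    rw [CoxeterSystem.IsRightDescent, ← hstep, ha, hb]
    omega
end
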